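/- Let μ be a Radon measure on Q_T that is absolutely continuous with respect to the parabolic capacity cap-bar. Then there exist positive Radon measures γ₁, γ₂ on Q_T which belong (as functionals) to L²(0,T;H⁻¹_ρ), and nonnegative functions α_i ∈ L¹_loc(Q_T,γ_i), i=1,2, such that dμ = α₁ dγ₁ − α₂ dγ₂. -/

import Mathlib

/- Self-contained formalization setting.

Notation: `Q_T = [0,T] × ℝ^d` is represented by `Set.Icc (0:ℝ) T ×ˢ Set.univ`
inside `ℝ × (Fin d → ℝ)`.  The weight `ρ(x) = (1+|x|²)^{-α}`. -/

open MeasureTheory Set Filter Topology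
open scoped ENNReal

noncomputable section

/-- The weight `ρ(x) = (1+|x|²)^(-α)`. -/
def rho {d : ℕ} (αe : ℝ) (x : Fin d → ℝ) : ℝ := (1 + ∑ i, (x i) ^ 2) ^ (-αe)

/-- `f ∈ 𝕃_{p,ρ}(Q_T)`, i.e. `f·ρ ∈ 𝕃_p(Q_T)`. -/
def MemLprho {d : ℕ} (T αe pe : ℝ) (f : ℝ → (Fin d → ℝ) → ℝ) : Prop :=
  Measurable (Function.uncurry f) ∧
    (∫⁻ q : ℝ × (Fin d → ℝ) in Icc (0:ℝ) T ×ˢ univ,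
      ENNReal.ofReal (|f q.1 q.2 * rho αe q.2| ^ pe)) < ⊤

/-- `f ∈ 𝕃_{2,ρ}(Q_T)`. -/
def MemL2rho {d : ℕ} (T αe : ℝ) (f : ℝ → (Fin d → ℝ) → ℝ) : Prop :=
  MemLprho T αe 2 f

/-- `f̄ ∈ 𝕃_{2,ρ}(Q_T; ℝ^d)` (componentwise). -/
def MemL2rhoVec {d : ℕ} (T αe : ℝ) (f : ℝ → (Fin d → ℝ) → Fin d → ℝ) : Prop :=
  ∀ i, MemL2rho T αe fun t x => f t x i

/-- `f̄ ∈ 𝕃_{p,ρ}(Q_T; ℝ^d)` (componentwise). -/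
def MemLprhoVec {d : ℕ} (T αe pe : ℝ) (f : ℝ → (Fin d → ℝ) → Fin d → ℝ) : Prop :=
  ∀ i, MemLprho T αe pe fun t x => f t x i

/-- The squared norm `‖f‖²_{2,ρ}` (as an extended real). -/
def l2rhoNormSq {d : ℕ} (T αe : ℝ) (f : ℝ → (Fin d → ℝ) → ℝ) : ℝ≥0∞ :=
  ∫⁻ q : ℝ × (Fin d → ℝ) in Icc (0:ℝ) T ×ˢ univ,
    ENNReal.ofReal ((f q.1 q.2) ^ 2 * (rho αe q.2) ^ 2)

/-- Squared `𝕃_{2,ρ}`-distance of two vector fields on `Q_T`. -/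
def l2rhoDistSq {d : ℕ} (T αe : ℝ) (f g : ℝ → (Fin d → ℝ) → Fin d → ℝ) : ℝ≥0∞ :=
  ∫⁻ q : ℝ × (Fin d → ℝ) in Icc (0:ℝ) T ×ˢ univ,
    ENNReal.ofReal ((∑ i, (f q.1 q.2 i - g q.1 q.2 i) ^ 2) * (rho αe q.2) ^ 2)

/-- Bounded Borel vector fields on `Q_T`. -/
def BddBorelVec {d : ℕ} (f : ℝ → (Fin d → ℝ) → Fin d → ℝ) : Prop :=
  (∀ i, Measurable fun q : ℝ × (Fin d → ℝ) => f q.1 q.2 i) ∧ ∃ C, ∀ t x i, |f t x i| ≤ C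

/-- Test functions `C_0^∞((0,T) × ℝ^d)`. -/
def IsTestQT {d : ℕ} (T : ℝ) (φ : ℝ × (Fin d → ℝ) → ℝ) : Prop :=
  ContDiff ℝ (⊤ : ℕ∞) φ ∧ HasCompactSupport φ ∧
    tsupport φ ⊆ Ioo (0:ℝ) T ×ˢ (univ : Set (Fin d → ℝ))

/-- Spatial partial derivative `∂φ/∂x_i`. -/
def dxi {d : ℕ} (φ : ℝ × (Fin d → ℝ) → ℝ) (q : ℝ × (Fin d → ℝ)) (i : Fin d) : ℝ :=
  fderiv ℝ φ q (0, Pi.single i 1)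

/-- Time derivative `∂φ/∂t`. -/
def dt' {d : ℕ} (φ : ℝ × (Fin d → ℝ) → ℝ) (q : ℝ × (Fin d → ℝ)) : ℝ :=
  fderiv ℝ φ q (1, 0)

/-- `du` is the (spatial) weak gradient of `u` on `(0,T) × ℝ^d`. -/
def IsWeakGrad {d : ℕ} (T : ℝ) (u : ℝ → (Fin d → ℝ) → ℝ)
    (du : ℝ → (Fin d → ℝ) → Fin d → ℝ) : Prop :=
  ∀ φ : ℝ × (Fin d → ℝ) → ℝ, IsTestQT T φ → ∀ i,
    (∫ q : ℝ × (Fin d → ℝ), u q.1 q.2 * dxi φ q i) =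
      - ∫ q : ℝ × (Fin d → ℝ), du q.1 q.2 i * φ q

/-- `g0 + div ḡ = f0 + div f̄` as distributions on `(0,T) × ℝ^d`. -/
def SameFunc {d : ℕ} (T : ℝ) (g0 : ℝ → (Fin d → ℝ) → ℝ) (gb : ℝ → (Fin d → ℝ) → Fin d → ℝ)
    (f0 : ℝ → (Fin d → ℝ) → ℝ) (fb : ℝ → (Fin d → ℝ) → Fin d → ℝ) : Prop :=
  ∀ φ : ℝ × (Fin d → ℝ) → ℝ, IsTestQT T φ →
    (∫ q : ℝ × (Fin d → ℝ), g0 q.1 q.2 * φ q) -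
        (∫ q : ℝ × (Fin d → ℝ), ∑ i, gb q.1 q.2 i * dxi φ q i) =
      (∫ q : ℝ × (Fin d → ℝ), f0 q.1 q.2 * φ q) -
        ∫ q : ℝ × (Fin d → ℝ), ∑ i, fb q.1 q.2 i * dxi φ q i

/-- The action of the functional `Φ = f⁰ + div f̄ ∈ 𝕃₂(0,T;H⁻¹_ρ)` on an element `η`
of `𝕃₂(0,T;H¹_ρ)` with weak spatial gradient `g`:
`Φ(η) = ⟨f⁰,η⟩_{2,ρ} − ⟨f̄, ∇(ρ²η)⟩₂`. -/
def pairing {d : ℕ} (T αe : ℝ) (f0 : ℝ → (Fin d → ℝ) → ℝ)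
    (fb : ℝ → (Fin d → ℝ) → Fin d → ℝ) (η : ℝ → (Fin d → ℝ) → ℝ)
    (g : ℝ → (Fin d → ℝ) → Fin d → ℝ) : ℝ :=
  (∫ q : ℝ × (Fin d → ℝ) in Icc (0:ℝ) T ×ˢ univ,
      f0 q.1 q.2 * η q.1 q.2 * (rho αe q.2) ^ 2)
    - ∫ q : ℝ × (Fin d → ℝ) in Icc (0:ℝ) T ×ˢ univ,
        ∑ i, fb q.1 q.2 i * ((rho αe q.2) ^ 2 * g q.1 q.2 i
          + η q.1 q.2 * fderiv ℝ (fun y : Fin d → ℝ => (rho αe y) ^ 2) q.2 (Pi.single i 1))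

/-- Action of `Φ = f⁰ + div f̄` on a smooth test function. -/
def pairingTest {d : ℕ} (T αe : ℝ) (f0 : ℝ → (Fin d → ℝ) → ℝ)
    (fb : ℝ → (Fin d → ℝ) → Fin d → ℝ) (φ : ℝ × (Fin d → ℝ) → ℝ) : ℝ :=
  pairing T αe f0 fb (fun t x => φ (t, x)) (fun t x i => dxi φ (t, x) i)

/-- The capacity `cap-bar` of a compact set `K ⊆ (0,T) × ℝ^d`:
`inf { ∫_{Q_T} |∇η|² : η ∈ C₀^∞((0,T)×ℝ^d), η ≥ 1 on K }`. -/
def capOfCompact {d : ℕ} (T : ℝ) (K : Set (ℝ × (Fin d → ℝ))) : ℝ≥0∞ :=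
  ⨅ (φ : ℝ × (Fin d → ℝ) → ℝ) (_ : IsTestQT T φ) (_ : ∀ q ∈ K, 1 ≤ φ q),
    ∫⁻ q : ℝ × (Fin d → ℝ), ENNReal.ofReal (∑ i, (dxi φ q i) ^ 2)

/-- The capacity `cap-bar`, extended to arbitrary sets in the standard way. -/
def capBar {d : ℕ} (T : ℝ) (B : Set (ℝ × (Fin d → ℝ))) : ℝ≥0∞ :=
  ⨅ (U : Set (ℝ × (Fin d → ℝ))) (_ : IsOpen U) (_ : B ⊆ U),
    ⨆ (K : Set (ℝ × (Fin d → ℝ))) (_ : IsCompact K)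
      (_ : K ⊆ U ∩ (Ioo (0:ℝ) T ×ˢ (univ : Set (Fin d → ℝ)))), capOfCompact T K

/-- A (positive Radon) measure `γ` on `Q_T` belongs, as a functional, to
`𝕃₂(0,T;H⁻¹_ρ)`: there are `f⁰, f̄ ∈ 𝕃_{2,ρ}(Q_T)` with `∫ φ dγ = (f⁰ + div f̄)(φ)`
for all test functions `φ`. -/
def MeasureRepHminus {d : ℕ} (T αe : ℝ) (γ : Measure (ℝ × (Fin d → ℝ))) : Prop :=
  ∃ f0 fb, MemL2rho T αe f0 ∧ MemL2rhoVec T αe fb ∧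
    ∀ φ : ℝ × (Fin d → ℝ) → ℝ, IsTestQT T φ → pairingTest T αe f0 fb φ = ∫ q, φ q ∂γ

/-- The squared `𝕃₂(0,T;H⁻¹_ρ)`-norm of (the functional represented by) a measure `μ`,
realized as the infimum over representations `μ = f⁰ + div f̄`. -/
def measNormStarSq {d : ℕ} (T αe : ℝ) (μ : Measure (ℝ × (Fin d → ℝ))) : ℝ≥0∞ :=
  ⨅ (f0 : ℝ → (Fin d → ℝ) → ℝ) (fb : ℝ → (Fin d → ℝ) → Fin d → ℝ)
    (_ : MemL2rho T αe f0) (_ : MemL2rhoVec T αe fb)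
    (_ : ∀ φ : ℝ × (Fin d → ℝ) → ℝ, IsTestQT T φ →
      pairingTest T αe f0 fb φ = ∫ q, φ q ∂μ),
    l2rhoNormSq T αe f0 + ∑ i, l2rhoNormSq T αe fun t x => fb t x i

/-- The class `S^c`:  positive Radon measures on `Q_T` whose restriction to
`(0,T) × ℝ^d` is absolutely continuous w.r.t. `cap-bar` and which do not charge
`{0} × ℝ^d` and `{T} × ℝ^d`. -/
def IsScMeasure {d : ℕ} (T : ℝ) (μ : Measure (ℝ × (Fin d → ℝ))) : Prop :=
  IsFiniteMeasureOnCompacts μ ∧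
  (∀ B : Set (ℝ × (Fin d → ℝ)), MeasurableSet B →
      B ⊆ Ioo (0:ℝ) T ×ˢ (univ : Set (Fin d → ℝ)) → capBar T B = 0 → μ B = 0) ∧
  μ ({(0:ℝ)} ×ˢ (univ : Set (Fin d → ℝ))) = 0 ∧
  μ ({T} ×ˢ (univ : Set (Fin d → ℝ))) = 0

/-- The class `S^c₀ = S^c ∩ 𝕃₂(0,T;H⁻¹_ρ)`. -/
def IsSc0Measure {d : ℕ} (T αe : ℝ) (μ : Measure (ℝ × (Fin d → ℝ))) : Prop :=
  IsScMeasure T μ ∧ MeasureRepHminus T αe μ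

/-!
Let `ν` be a positive Radon measure that does not charge sets of zero capacity. Fix a piece of `ν`
carried by a compact set. For each `n`, greedily remove superlevel sets `{φₖ ≥ 1}` of test
functions whose energies are at most `1 / (n + 1)` times the mass they remove. The removed set has
capacity at most `ν univ / (n + 1)`, because a smoothed maximum of the `φₖ` has at most the sum of
their energies. On the remaining set `Fₙ`, every test function satisfies
`ν ({ψ ≥ 1} ∩ Fₙ) ≤ (n + 1) E(ψ)`. The complement of `⋃ Fₙ` has zero capacity, hence zero measure.

By the layer cake formula, the estimate on `Fₙ` bounds `∫_{Fₙ} ψ dν` by the square root of the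
energy of `ψ`, and a cutoff near the compact set compares the energy with the norm of
`L²(0,T;H¹_ρ)`. A weighted sum over the countably many pieces yields a density `0 < θ ≤ 1` for which
`γ = θ ν` is a bounded functional, and the Riesz representation theorem provides `f⁰` and `f̄`.
With `α = 1 / θ` this gives `ν = α γ`; the signed case follows by treating the two parts of the
Jordan decomposition.
-/

section Exhaustion

variable {X ι : Type*}

theorem exists_forall_le_two_mul {P : ι → Prop} (hP : ∃ i, P i) (g : ι → ℝ≥0∞) {M : ℝ≥0∞}
    (hM : M ≠ ⊤) (hgM : ∀ i, g i ≤ M) : ∃ i, P i ∧ ∀ j, P j → g j ≤ 2 * g i := by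
  set S : ℝ≥0∞ := ⨆ (j : ι) (_ : P j), g j with hS
  have le_S : ∀ j, P j → g j ≤ S := le_iSup₂ (f := fun j (_ : P j) => g j)
  have S_ne_top : S ≠ ⊤ := ne_top_of_le_ne_top hM (iSup₂_le fun j _ => hgM j)
  rcases eq_or_ne S 0 with hS0 | hS0
  · obtain ⟨i, hi⟩ := hP
    exact ⟨i, hi, fun j hj => (le_S j hj).trans (by simp [hS0])⟩
  · obtain ⟨i, hi⟩ := lt_iSup_iff.1 ((ENNReal.half_lt_self hS0 S_ne_top).trans_eq hS)
    obtain ⟨hPi, hi⟩ := lt_iSup_iff.1 hi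
    refine ⟨i, hPi, fun j hj => (le_S j hj).trans ?_⟩
    rw [mul_comm]
    exact (ENNReal.div_le_iff two_ne_zero ENNReal.ofNat_ne_top).1 hi.le

/-- The union of the first `n` sets chosen from the family `A` by the rule `f`, which picks the
index of the next set from the union of the sets chosen so far. -/
def greedyUnion (A : ι → Set X) (f : Set X → ι) : ℕ → Set X
  | 0 => ∅
  | n + 1 => greedyUnion A f n ∪ A (f (greedyUnion A f n))

theorem greedyUnion_monotone (A : ι → Set X) (f : Set X → ι) : Monotone (greedyUnion A f) :=
  monotone_nat_of_le_succ fun _ => subset_union_left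

theorem greedyUnion_subset_iUnion (A : ι → Set X) (f : Set X → ι) (n : ℕ) :
    greedyUnion A f n ⊆ ⋃ k, A (f (greedyUnion A f k)) := by
  induction n with
  | zero => exact empty_subset _
  | succ n ih =>
    exact union_subset ih (subset_iUnion (fun k => A (f (greedyUnion A f k))) n)

theorem pairwise_disjoint_greedyUnion (A : ι → Set X) (f : Set X → ι) :
    Pairwise (Function.onFun Disjoint fun k => A (f (greedyUnion A f k)) \ greedyUnion A f k) := by
  refine (pairwise_disjoint_on _).2 fun i j hij => Set.disjoint_left.2 fun x hx hx' => hx'.2 ?_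
  exact greedyUnion_monotone A f hij (Or.inr hx.1)

variable [MeasurableSpace X]

theorem measurableSet_greedyUnion {A : ι → Set X} (hA : ∀ i, MeasurableSet (A i))
    (f : Set X → ι) (n : ℕ) : MeasurableSet (greedyUnion A f n) := by
  induction n with
  | zero => exact MeasurableSet.empty
  | succ n ih => exact ih.union (hA _)

theorem exists_seq_tsum_le_measure_sdiff_le (ν : Measure X) [IsFiniteMeasure ν] {A : ι → Set X}
    (hA : ∀ i, MeasurableSet (A i)) {e : ι → ℝ≥0∞} (he : ∃ i, e i = 0) :
    ∃ s : ℕ → ι, ∑' k, e (s k) ≤ ν univ ∧ ∀ i, ν (A i \ ⋃ k, A (s k)) ≤ e i := by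
  have step (B : Set X) : ∃ i, e i ≤ ν (A i \ B) ∧
      ∀ j, e j ≤ ν (A j \ B) → ν (A j \ B) ≤ 2 * ν (A i \ B) :=
    exists_forall_le_two_mul (he.imp fun i hi => by simp [hi]) (fun i => ν (A i \ B))
      (measure_ne_top ν univ) fun i => measure_mono (subset_univ _)
  choose f he_le hle_two using step
  set B := greedyUnion A f
  have gain_sum : ∑' k, ν (A (f (B k)) \ B k) ≤ ν univ := by
    rw [← measure_iUnion (pairwise_disjoint_greedyUnion A f)
      fun k => (hA _).diff (measurableSet_greedyUnion hA f k)]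
    exact measure_mono (subset_univ _)
  refine ⟨fun k => f (B k), (ENNReal.tsum_le_tsum fun k => he_le (B k)).trans gain_sum,
    fun i => ?_⟩
  by_contra! hlt
  have le_gain (k : ℕ) : ν (A i \ ⋃ k, A (f (B k))) ≤ 2 * ν (A (f (B k)) \ B k) := by
    have hsub : ν (A i \ ⋃ k, A (f (B k))) ≤ ν (A i \ B k) :=
      measure_mono (sdiff_subset_sdiff_right (greedyUnion_subset_iUnion A f k))
    exact hsub.trans (hle_two (B k) i (hlt.le.trans hsub))
  have gain_tendsto : Tendsto (fun k => 2 * ν (A (f (B k)) \ B k)) atTop (𝓝 0) := by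
    simpa using ENNReal.Tendsto.const_mul (ENNReal.tendsto_atTop_zero_of_tsum_ne_top
      (ne_top_of_le_ne_top (measure_ne_top ν univ) gain_sum)) (Or.inr ENNReal.ofNat_ne_top)
  exact not_lt_zero (hlt.trans_le (ge_of_tendsto' gain_tendsto le_gain))

end Exhaustion

section MeasureTheoreticLemmas

variable {X : Type*} [MeasurableSpace X]

theorem lintegral_Ioi_ofReal_rpow_neg_two {N : ℝ} (hN : 0 < N) :
    ∫⁻ t in Ioi N, ENNReal.ofReal (t ^ (-2 : ℝ)) = ENNReal.ofReal N⁻¹ := by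
  rw [← ofReal_integral_eq_lintegral_ofReal
      (integrableOn_Ioi_rpow_of_lt (by norm_num) hN)
      ((ae_restrict_iff' measurableSet_Ioi).2 <|
        ae_of_all _ fun t ht => Real.rpow_nonneg (hN.trans ht).le _),
    integral_Ioi_rpow_of_lt (by norm_num) hN]
  norm_num [Real.rpow_neg_one]

theorem lintegral_Ioi_ofReal_div_sq {N : ℝ} (hN : 0 ≤ N) :
    ∫⁻ t in Ioi N, ENNReal.ofReal ((N / t) ^ 2) = ENNReal.ofReal N := by
  rcases hN.eq_or_lt with rfl | hN
  · simp
  calc ∫⁻ t in Ioi N, ENNReal.ofReal ((N / t) ^ 2)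
      = ∫⁻ t in Ioi N, ENNReal.ofReal (N ^ 2) * ENNReal.ofReal (t ^ (-2 : ℝ)) := by
        refine setLIntegral_congr_fun measurableSet_Ioi fun t ht => ?_
        rw [← ENNReal.ofReal_mul (sq_nonneg N), Real.rpow_neg (hN.trans ht).le, Real.rpow_two,
          div_pow, div_eq_mul_inv]
    _ = ENNReal.ofReal (N ^ 2 * N⁻¹) := by
        rw [lintegral_const_mul _ (by fun_prop), lintegral_Ioi_ofReal_rpow_neg_two hN,
          ENNReal.ofReal_mul (sq_nonneg N)]
    _ = ENNReal.ofReal N := by rw [sq, mul_inv_cancel_right₀ hN.ne']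

theorem lintegral_ofReal_le_of_measure_le_div_sq {μ : Measure X} {f : X → ℝ} (hf : Measurable f)
    {c : ℝ≥0∞} {N : ℝ} (hN : 0 ≤ N)
    (h : ∀ t > 0, μ {x | t ≤ f x} ≤ c * ENNReal.ofReal ((N / t) ^ 2)) :
    ∫⁻ x, ENNReal.ofReal (f x) ∂μ ≤ (μ univ + c) * ENNReal.ofReal N := by
  have hmax : ∫⁻ x, ENNReal.ofReal (f x) ∂μ = ∫⁻ x, ENNReal.ofReal (max (f x) 0) ∂μ := by
    simp only [ENNReal.ofReal_max, ENNReal.ofReal_zero, zero_le, sup_of_le_left]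
  have hmax_meas (t : ℝ) (ht : 0 < t) : μ {x | t ≤ max (f x) 0} = μ {x | t ≤ f x} := by
    simp only [le_max_iff, not_le.2 ht, or_false]
  rw [hmax, lintegral_eq_lintegral_meas_le μ (f := fun x => max (f x) 0)
      (ae_of_all _ fun x => le_max_right _ _)
      (hf.max measurable_const).aemeasurable, ← Ioc_union_Ioi_eq_Ioi hN,
    lintegral_union measurableSet_Ioi (Ioc_disjoint_Ioi le_rfl), add_mul]
  gcongr
  · calc ∫⁻ t in Ioc 0 N, μ {x | t ≤ max (f x) 0}
        ≤ ∫⁻ _ in Ioc 0 N, μ univ := lintegral_mono fun t => measure_mono (subset_univ _)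
      _ = μ univ * ENNReal.ofReal N := by simp
  · calc ∫⁻ t in Ioi N, μ {x | t ≤ max (f x) 0}
        ≤ ∫⁻ t in Ioi N, c * ENNReal.ofReal ((N / t) ^ 2) :=
          setLIntegral_mono' measurableSet_Ioi fun t ht =>
            (hmax_meas t (hN.trans_lt ht)).trans_le (h t (hN.trans_lt ht))
      _ = c * ENNReal.ofReal N := by
        rw [lintegral_const_mul _ (by fun_prop), lintegral_Ioi_ofReal_div_sq hN]

theorem exists_density_lintegral_mul_le {ι : Type*} [Countable ι] {F : ι → Set X}
    (hF : ∀ i, MeasurableSet (F i)) {D : ι → ℝ≥0∞} (hD : ∀ i, D i ≠ ⊤) :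
    ∃ θ : X → ℝ≥0∞, Measurable θ ∧ (∀ x, θ x ≤ 1) ∧ (∀ x ∈ ⋃ i, F i, θ x ≠ 0) ∧
      ∀ (μ : Measure X) (f : X → ℝ≥0∞) (c : ℝ≥0∞), Measurable f →
        (∀ i, ∫⁻ x in F i, f x ∂μ ≤ D i * c) → ∫⁻ x, θ x * f x ∂μ ≤ c := by
  obtain ⟨ε, ε_pos, ε_sum⟩ := ENNReal.exists_pos_sum_of_countable' one_ne_zero ι
  let w : ι → ℝ≥0∞ := fun i => ε i / (1 + D i)
  have w_le (i : ι) : w i ≤ ε i := ENNReal.div_le_of_le_mul (le_mul_of_one_le_right' le_self_add)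
  have w_mul_le (i : ι) : w i * D i ≤ ε i := by
    rw [ENNReal.mul_comm_div]
    exact mul_le_of_le_one_right' (ENNReal.div_le_of_le_mul (by simp))
  have w_ne_zero (i : ι) : w i ≠ 0 :=
    (ENNReal.div_pos (ε_pos i).ne' (ENNReal.add_ne_top.2 ⟨ENNReal.one_ne_top, hD i⟩)).ne'
  refine ⟨fun x => ∑' i, (F i).indicator (fun _ => w i) x,
    Measurable.tsum fun i => measurable_const.indicator (hF i), fun x => ?_,
    fun x hx => ?_, fun μ f c hf h => ?_⟩
  · refine (ENNReal.tsum_le_tsum fun i => ?_).trans ε_sum.le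
    exact (indicator_le_self _ _ x).trans (w_le i)
  · obtain ⟨i, hi⟩ := mem_iUnion.1 hx
    rw [Ne, ENNReal.tsum_eq_zero]
    exact fun h => w_ne_zero i (by simpa [hi] using h i)
  · calc ∫⁻ x, (∑' i, (F i).indicator (fun _ => w i) x) * f x ∂μ
        = ∫⁻ x, ∑' i, (F i).indicator (fun x => w i * f x) x ∂μ := by
          simp_rw [← ENNReal.tsum_mul_right, indicator_mul_left]
      _ = ∑' i, w i * ∫⁻ x in F i, f x ∂μ := by
          rw [lintegral_tsum fun i => ((hf.const_mul _).indicator (hF i)).aemeasurable]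
          simp_rw [fun i => lintegral_indicator (hF i) (μ := μ), lintegral_const_mul _ hf]
      _ ≤ ∑' i, ε i * c := ENNReal.tsum_le_tsum fun i =>
          (mul_le_mul_right (h i) (w i)).trans <| by
            rw [← mul_assoc]
            exact mul_le_mul_left (w_mul_le i) c
      _ ≤ c := by
          rw [ENNReal.tsum_mul_right]
          exact mul_le_of_le_one_left' ε_sum.le

theorem lintegral_ofReal_norm_sq {E : Type*} [NormedAddCommGroup E] (f : X → E) (μ : Measure X) :
    ∫⁻ x, ENNReal.ofReal (‖f x‖ ^ 2) ∂μ = eLpNorm f 2 μ ^ 2 := by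
  have h := eLpNorm_nnreal_pow_eq_lintegral (f := f) (μ := μ) (p := 2) two_ne_zero
  norm_num at h
  rw [h]
  simp_rw [ENNReal.ofReal_pow (norm_nonneg _), ofReal_norm]

end MeasureTheoreticLemmas

theorem exists_inner_eq_of_le_mul_norm {V H : Type*} [AddCommGroup V] [Module ℝ V]
    [NormedAddCommGroup H] [InnerProductSpace ℝ H] [CompleteSpace H] (L : V →ₗ[ℝ] H)
    (l : V →ₗ[ℝ] ℝ) {M : ℝ} (hl : ∀ v, l v ≤ M * ‖L v‖) :
    ∃ h : H, ∀ v, l v = inner ℝ h (L v) := by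
  have abs_le (v : V) : ‖l v‖ ≤ M * ‖L v‖ := abs_le'.2 ⟨hl v, by simpa using hl (-v)⟩
  obtain ⟨F, hF, -⟩ := exists_extension_norm_eq (LinearMap.range L) (l.compLeftInverse L)
  refine ⟨(InnerProductSpace.toDual ℝ H).symm F, fun v => ?_⟩
  rw [InnerProductSpace.toDual_symm_apply]
  exact (LinearMap.compLeftInverse_apply_of_bdd l L ⟨M, abs_le⟩ v _ rfl).symm.trans (hF _).symm

section JordanDecomposition

variable {X : Type*} [MeasurableSpace X]

theorem exists_jordanDecomposition_of_sigmaFinite (μ ν : Measure X) [SigmaFinite μ]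
    [SigmaFinite ν] :
    ∃ (μ' ν' : Measure X) (S : Set X), MeasurableSet S ∧ μ' ≤ μ ∧ ν' ≤ ν ∧
      μ + ν' = ν + μ' ∧ μ' Sᶜ = 0 ∧ ν' S = 0 := by
  set p := μ.rnDeriv (μ + ν)
  set n := ν.rnDeriv (μ + ν)
  have hpm : Measurable p := Measure.measurable_rnDeriv _ _
  have hnm : Measurable n := Measure.measurable_rnDeriv _ _
  have hp : (μ + ν).withDensity p = μ := Measure.withDensity_rnDeriv_eq _ _
    (Measure.absolutelyContinuous_of_le (Measure.le_add_right le_rfl))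
  have hn : (μ + ν).withDensity n = ν := Measure.withDensity_rnDeriv_eq _ _
    (Measure.absolutelyContinuous_of_le (Measure.le_add_left le_rfl))
  refine ⟨(μ + ν).withDensity (p - n), (μ + ν).withDensity (n - p), {x | n x < p x},
    measurableSet_lt hnm hpm, ?_, ?_, ?_, ?_, ?_⟩
  · exact (withDensity_mono (ae_of_all _ fun x => tsub_le_self)).trans_eq hp
  · exact (withDensity_mono (ae_of_all _ fun x => tsub_le_self)).trans_eq hn
  · calc μ + (μ + ν).withDensity (n - p) = (μ + ν).withDensity (p + (n - p)) := by
          rw [withDensity_add_left hpm, hp]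
      _ = (μ + ν).withDensity (n + (p - n)) := by
          congr 1
          ext x
          simp only [Pi.add_apply, Pi.sub_apply, add_tsub_eq_max, max_comm]
      _ = ν + (μ + ν).withDensity (p - n) := by rw [withDensity_add_left hnm, hn]
  · rw [withDensity_apply _ (measurableSet_lt hnm hpm).compl]
    exact setLIntegral_eq_zero (measurableSet_lt hnm hpm).compl fun x hx =>
      tsub_eq_zero_of_le (not_lt.1 hx)
  · rw [withDensity_apply _ (measurableSet_lt hnm hpm)]
    exact setLIntegral_eq_zero (measurableSet_lt hnm hpm) fun x hx =>
      tsub_eq_zero_of_le (le_of_lt hx)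

theorem measure_eq_zero_of_jordanDecomposition {μ ν μ' ν' : Measure X} [SigmaFinite μ]
    {S B : Set X} (hS : MeasurableSet S) (hadd : μ + ν' = ν + μ') (hμ' : μ' Sᶜ = 0)
    (hν' : ν' S = 0) (hB : MeasurableSet B)
    (heq : ∀ A ⊆ B, MeasurableSet A → μ A = ν A) : μ' B = 0 := by
  have restrict_eq : μ.restrict (B ∩ S) = ν.restrict (B ∩ S) := by
    ext A hA
    rw [Measure.restrict_apply hA, Measure.restrict_apply hA]
    exact heq _ (fun x hx => hx.2.1) (hA.inter (hB.inter hS))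
  have hν'_restrict : ν'.restrict (B ∩ S) = 0 :=
    Measure.restrict_eq_zero.2 (measure_mono_null inter_subset_right hν')
  have hμ'_restrict : μ'.restrict (B ∩ S) = 0 := by
    have h := congrArg (Measure.restrict · (B ∩ S)) hadd
    simp only [Measure.restrict_add, hν'_restrict, ← restrict_eq] at h
    exact ((Measure.add_right_inj _ _ _).1 h).symm
  rw [← inter_union_sdiff B S]
  exact measure_union_null (Measure.restrict_eq_zero.1 hμ'_restrict)
    (measure_mono_null (fun x hx => hx.2) hμ')

end JordanDecomposition

theorem sq_fderiv_sqrt_sum_sq_add_sq_le {E ι : Type*} [NormedAddCommGroup E] [NormedSpace ℝ E]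
    [Fintype ι] {f : ι → E → ℝ} {x : E} (hf : ∀ k, DifferentiableAt ℝ (f k) x) {δ : ℝ}
    (hδ : δ ≠ 0) (v : E) :
    (fderiv ℝ (fun y => √(∑ k, f k y ^ 2 + δ ^ 2)) x v) ^ 2 ≤ ∑ k, (fderiv ℝ (f k) x v) ^ 2 := by
  set R := ∑ k, f k x ^ 2 + δ ^ 2 with hR
  have R_pos : 0 < R := by positivity
  have hasFDerivAt_sum : HasFDerivAt (fun y => ∑ k, f k y ^ 2 + δ ^ 2)
      (∑ k, (2 * f k x) • fderiv ℝ (f k) x) x :=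
    (HasFDerivAt.fun_sum fun k _ => by simpa using (hf k).hasFDerivAt.pow 2).add_const _
  have fderiv_eq : fderiv ℝ (fun y => √(∑ k, f k y ^ 2 + δ ^ 2)) x v
      = (∑ k, f k x * fderiv ℝ (f k) x v) / √R := by
    rw [(hasFDerivAt_sum.sqrt R_pos.ne').fderiv]
    simp only [_root_.smul_apply, _root_.sum_apply, smul_eq_mul, mul_assoc, ← Finset.mul_sum]
    rw [← hR]
    field_simp
  rw [fderiv_eq, div_pow, Real.sq_sqrt R_pos.le, div_le_iff₀ R_pos]
  calc (∑ k, f k x * fderiv ℝ (f k) x v) ^ 2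
      ≤ (∑ k, f k x ^ 2) * ∑ k, (fderiv ℝ (f k) x v) ^ 2 := Finset.sum_mul_sq_le_sq_mul_sq _ _ _
    _ ≤ R * ∑ k, (fderiv ℝ (f k) x v) ^ 2 := by
        gcongr
        exact le_add_of_nonneg_right (sq_nonneg δ)
    _ = (∑ k, (fderiv ℝ (f k) x v) ^ 2) * R := mul_comm _ _

section TestFunctions

variable {d : ℕ} {T : ℝ} {φ ψ : ℝ × (Fin d → ℝ) → ℝ}

namespace IsTestQT

theorem of_support_subset (hψ : ContDiff ℝ (⊤ : ℕ∞) ψ) {K : Set (ℝ × (Fin d → ℝ))}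
    (hK : IsCompact K) (hKT : K ⊆ Ioo 0 T ×ˢ univ) (h : Function.support ψ ⊆ K) :
    IsTestQT T ψ :=
  have htsupport : tsupport ψ ⊆ K := closure_minimal h hK.isClosed
  ⟨hψ, hK.of_isClosed_subset (isClosed_tsupport ψ) htsupport, htsupport.trans hKT⟩

theorem continuous (hφ : IsTestQT T φ) : Continuous φ := hφ.1.continuous

theorem differentiable (hφ : IsTestQT T φ) : Differentiable ℝ φ :=
  hφ.1.differentiable (by simp)

theorem eq_zero_of_notMem (hφ : IsTestQT T φ) {q : ℝ × (Fin d → ℝ)}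
    (hq : q ∉ Ioo 0 T ×ˢ univ) : φ q = 0 :=
  image_eq_zero_of_notMem_tsupport fun h => hq (hφ.2.2 h)

theorem integrable (hφ : IsTestQT T φ) (μ : Measure (ℝ × (Fin d → ℝ)))
    [IsFiniteMeasureOnCompacts μ] : Integrable φ μ :=
  hφ.continuous.integrable_of_hasCompactSupport hφ.2.1

protected theorem zero : IsTestQT T (0 : ℝ × (Fin d → ℝ) → ℝ) :=
  of_support_subset contDiff_const isCompact_empty (empty_subset _) (by simp)

theorem mul_left (hφ : IsTestQT T φ) (hψ : ContDiff ℝ (⊤ : ℕ∞) ψ) : IsTestQT T (ψ * φ) :=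
  of_support_subset (hψ.mul hφ.1) hφ.2.1 hφ.2.2
    ((Function.support_mul_subset_right ψ φ).trans (subset_tsupport φ))

theorem const_smul (hφ : IsTestQT T φ) (c : ℝ) : IsTestQT T (c • φ) :=
  hφ.mul_left (ψ := fun _ => c) contDiff_const

theorem add (hφ : IsTestQT T φ) (hψ : IsTestQT T ψ) : IsTestQT T (φ + ψ) :=
  of_support_subset (hφ.1.add hψ.1) (hφ.2.1.union hψ.2.1) (union_subset hφ.2.2 hψ.2.2)
    ((Function.support_add φ ψ).trans
      (union_subset_union (subset_tsupport φ) (subset_tsupport ψ)))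

end IsTestQT

/-- The space `C₀^∞((0,T) × ℝ^d)` of test functions. -/
def testSubmodule (d : ℕ) (T : ℝ) : Submodule ℝ (ℝ × (Fin d → ℝ) → ℝ) where
  carrier := {φ | IsTestQT T φ}
  add_mem' := IsTestQT.add
  zero_mem' := IsTestQT.zero
  smul_mem' c _ hφ := hφ.const_smul c

theorem exists_isTestQT_eqOn_one {C : Set (ℝ × (Fin d → ℝ))} (hC : IsCompact C)
    (hCT : C ⊆ Ioo 0 T ×ˢ univ) : ∃ χ, IsTestQT T χ ∧ EqOn χ 1 C := by
  obtain ⟨K, hK, hCK, hKT⟩ := exists_compact_between hC (isOpen_Ioo.prod isOpen_univ) hCT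
  obtain ⟨χ, hχ0, hχ1, -⟩ := exists_contMDiffMap_zero_one_of_isClosed (n := (⊤ : ℕ∞))
    (modelWithCornersSelf ℝ (ℝ × (Fin d → ℝ))) isOpen_interior.isClosed_compl hC.isClosed
    (Set.disjoint_left.2 fun _ hq hqC => hq (hCK hqC))
  exact ⟨χ, .of_support_subset χ.contMDiff.contDiff hK hKT fun q hq =>
    interior_subset (by_contra fun h => hq (hχ0 h)), hχ1⟩

theorem dxi_add (hφ : Differentiable ℝ φ) (hψ : Differentiable ℝ ψ) (q : ℝ × (Fin d → ℝ))
    (i : Fin d) : dxi (φ + ψ) q i = dxi φ q i + dxi ψ q i := by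
  rw [dxi, fderiv_add (hφ q) (hψ q)]
  rfl

theorem dxi_mul (hφ : Differentiable ℝ φ) (hψ : Differentiable ℝ ψ) (q : ℝ × (Fin d → ℝ))
    (i : Fin d) : dxi (φ * ψ) q i = φ q * dxi ψ q i + ψ q * dxi φ q i := by
  rw [dxi, fderiv_mul (hφ q) (hψ q)]
  rfl

theorem dxi_const_smul (c : ℝ) (φ : ℝ × (Fin d → ℝ) → ℝ) (q : ℝ × (Fin d → ℝ)) (i : Fin d) :
    dxi (c • φ) q i = c * dxi φ q i := by
  rw [dxi, fderiv_const_smul_field]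
  rfl

theorem continuous_dxi (hφ : ContDiff ℝ (⊤ : ℕ∞) φ) (i : Fin d) :
    Continuous fun q => dxi φ q i :=
  (hφ.continuous_fderiv (by simp)).clm_apply continuous_const

theorem dxi_eq_zero_of_notMem_tsupport {q : ℝ × (Fin d → ℝ)} (hq : q ∉ tsupport φ) (i : Fin d) :
    dxi φ q i = 0 := by
  rw [dxi, Function.notMem_support.1 fun h => hq (support_fderiv_subset ℝ h),
    _root_.zero_apply]

end TestFunctions

section Capacity

variable {d : ℕ} {T : ℝ} {φ : ℝ × (Fin d → ℝ) → ℝ}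

/-- The spatial Dirichlet energy `∫ |∇φ|² dt dx`, whose infimum defines `capOfCompact`. -/
def dirichletEnergy (φ : ℝ × (Fin d → ℝ) → ℝ) : ℝ≥0∞ :=
  ∫⁻ q, ENNReal.ofReal (∑ i, dxi φ q i ^ 2)

theorem dirichletEnergy_zero : dirichletEnergy (0 : ℝ × (Fin d → ℝ) → ℝ) = 0 := by
  simp [dirichletEnergy, dxi]

theorem dirichletEnergy_const_smul (c : ℝ) (φ : ℝ × (Fin d → ℝ) → ℝ) :
    dirichletEnergy (c • φ) = ENNReal.ofReal (c ^ 2) * dirichletEnergy φ := by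
  simp_rw [dirichletEnergy, dxi_const_smul, mul_pow, ← Finset.mul_sum,
    ENNReal.ofReal_mul (sq_nonneg c)]
  exact lintegral_const_mul' _ _ ENNReal.ofReal_ne_top

theorem dirichletEnergy_le_sum {ι : Type*} [Fintype ι] {φ : ι → ℝ × (Fin d → ℝ) → ℝ}
    (hφ : ∀ k, ContDiff ℝ (⊤ : ℕ∞) (φ k)) {ψ : ℝ × (Fin d → ℝ) → ℝ}
    (hψ : ∀ q i, dxi ψ q i ^ 2 ≤ ∑ k, dxi (φ k) q i ^ 2) :
    dirichletEnergy ψ ≤ ∑ k, dirichletEnergy (φ k) := by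
  calc dirichletEnergy ψ ≤ ∫⁻ q, ∑ k, ENNReal.ofReal (∑ i, dxi (φ k) q i ^ 2) := by
        refine lintegral_mono fun q => ?_
        rw [← ENNReal.ofReal_sum_of_nonneg fun k _ => Finset.sum_nonneg fun _ _ => sq_nonneg _,
          Finset.sum_comm]
        exact ENNReal.ofReal_le_ofReal (Finset.sum_le_sum fun i _ => hψ q i)
    _ = ∑ k, dirichletEnergy (φ k) := lintegral_finsetSum _ fun k _ =>
        (continuous_finsetSum _ fun i _ =>
          (continuous_dxi (hφ k) i).pow 2).measurable.ennreal_ofReal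

theorem exists_isTestQT_sub_le_dirichletEnergy_le_sum {ι : Type*} [Fintype ι]
    {φ : ι → ℝ × (Fin d → ℝ) → ℝ} (hφ : ∀ k, IsTestQT T (φ k)) {δ : ℝ} (hδ : 0 < δ) :
    ∃ ψ, IsTestQT T ψ ∧ (∀ k q, φ k q - δ ≤ ψ q) ∧
      dirichletEnergy ψ ≤ ∑ k, dirichletEnergy (φ k) := by
  refine ⟨fun q => √(∑ k, φ k q ^ 2 + δ ^ 2) - δ, ?_, fun k q => sub_le_sub_right ?_ δ,
    dirichletEnergy_le_sum (fun k => (hφ k).1) fun q i => ?_⟩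
  · refine .of_support_subset (K := ⋃ k, tsupport (φ k)) ?_
      (isCompact_iUnion fun k => (hφ k).2.1) (iUnion_subset fun k => (hφ k).2.2) fun q hq => ?_
    · exact (((ContDiff.sum fun k _ => (hφ k).1.pow 2).add contDiff_const).sqrt
        fun q => by positivity).sub contDiff_const
    · by_contra h
      have hzero (k : ι) : φ k q = 0 :=
        image_eq_zero_of_notMem_tsupport fun hk => h (mem_iUnion_of_mem k hk)
      exact hq (by simp [hzero, Real.sqrt_sq hδ.le])
  · refine Real.le_sqrt_of_sq_le ?_
    exact (Finset.single_le_sum (f := fun k => φ k q ^ 2) (fun _ _ => sq_nonneg _)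
      (Finset.mem_univ k)).trans (le_add_of_nonneg_right (sq_nonneg δ))
  · rw [dxi, fderiv_sub_const]
    exact sq_fderiv_sqrt_sum_sq_add_sq_le (fun k => (hφ k).differentiable q) hδ.ne' _

theorem capOfCompact_le_sum_dirichletEnergy {ι : Type*} [Fintype ι]
    {φ : ι → ℝ × (Fin d → ℝ) → ℝ} (hφ : ∀ k, IsTestQT T (φ k)) {r s : ℝ} (hr : 0 < r)
    (hrs : r < s) {K : Set (ℝ × (Fin d → ℝ))} (hK : ∀ q ∈ K, ∃ k, s ≤ φ k q) :
    capOfCompact T K ≤ ENNReal.ofReal (r⁻¹ ^ 2) * ∑ k, dirichletEnergy (φ k) := by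
  obtain ⟨ψ, hψ, hle, henergy⟩ :=
    exists_isTestQT_sub_le_dirichletEnergy_le_sum hφ (sub_pos.2 hrs)
  refine iInf₂_le_of_le (r⁻¹ • ψ) (hψ.const_smul _) (iInf_le_of_le (fun q hq => ?_) ?_)
  · obtain ⟨k, hk⟩ := hK q hq
    have : r ≤ ψ q := by linarith [hle k q]
    rwa [Pi.smul_apply, smul_eq_mul, inv_mul_eq_div, one_le_div hr]
  · exact (dirichletEnergy_const_smul _ ψ).trans_le (by gcongr)

theorem capBar_mono {A B : Set (ℝ × (Fin d → ℝ))} (h : A ⊆ B) : capBar T A ≤ capBar T B :=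
  le_iInf₂ fun U hU => le_iInf fun hBU => iInf₂_le_of_le U hU (iInf_le _ (h.trans hBU))

theorem capBar_le_ofReal_inv_sq_mul_tsum {φ : ℕ → ℝ × (Fin d → ℝ) → ℝ}
    (hφ : ∀ k, IsTestQT T (φ k)) {Z : Set (ℝ × (Fin d → ℝ))} (hZ : Z ⊆ ⋃ k, {q | 1 ≤ φ k q})
    {r : ℝ} (hr0 : 0 < r) (hr1 : r < 1) :
    capBar T Z ≤ ENNReal.ofReal (r⁻¹ ^ 2) * ∑' k, dirichletEnergy (φ k) := by
  obtain ⟨s, hrs, hs1⟩ := exists_between hr1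
  have isOpen_superlevel (k : ℕ) : IsOpen {q | s < φ k q} :=
    isOpen_lt continuous_const (hφ k).continuous
  refine iInf₂_le_of_le (⋃ k, {q | s < φ k q}) (isOpen_iUnion isOpen_superlevel)
    (iInf_le_of_le (hZ.trans (iUnion_mono fun k q hq => hs1.trans_le hq)) ?_)
  refine iSup₂_le fun K hK => iSup_le fun hKU => ?_
  obtain ⟨t, ht⟩ := hK.elim_finite_subcover _ isOpen_superlevel (hKU.trans inter_subset_left)
  calc capOfCompact T K ≤ ENNReal.ofReal (r⁻¹ ^ 2) * ∑ k : t, dirichletEnergy (φ k) := by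
        refine capOfCompact_le_sum_dirichletEnergy (fun k : t => hφ k) hr0 hrs fun q hq => ?_
        obtain ⟨k, hk, hkq⟩ := mem_iUnion₂.1 (ht hq)
        exact ⟨⟨k, hk⟩, le_of_lt hkq⟩
    _ ≤ ENNReal.ofReal (r⁻¹ ^ 2) * ∑' k, dirichletEnergy (φ k) := by
        gcongr
        exact (Finset.sum_coe_sort t fun k => dirichletEnergy (φ k)).trans_le
          (ENNReal.sum_le_tsum t)

theorem capBar_le_tsum_dirichletEnergy {φ : ℕ → ℝ × (Fin d → ℝ) → ℝ}
    (hφ : ∀ k, IsTestQT T (φ k)) {Z : Set (ℝ × (Fin d → ℝ))}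
    (hZ : Z ⊆ ⋃ k, {q | 1 ≤ φ k q}) : capBar T Z ≤ ∑' k, dirichletEnergy (φ k) := by
  have htendsto : Tendsto (fun r : ℝ => ENNReal.ofReal (r⁻¹ ^ 2) * ∑' k, dirichletEnergy (φ k))
      (𝓝[<] 1) (𝓝 (ENNReal.ofReal (1⁻¹ ^ 2) * ∑' k, dirichletEnergy (φ k))) := by
    refine ENNReal.Tendsto.mul_const ?_ (Or.inl (by simp))
    exact (ENNReal.tendsto_ofReal ((tendsto_inv₀ one_ne_zero).pow 2)).mono_left
      nhdsWithin_le_nhds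
  refine (ge_of_tendsto htendsto ?_).trans_eq (by simp)
  filter_upwards [Ioo_mem_nhdsLT zero_lt_one] with r hr
  exact capBar_le_ofReal_inv_sq_mul_tsum hφ hZ hr.1 hr.2

end Capacity

section WeightedNorm

variable {d : ℕ} {T αe : ℝ} {φ ψ : ℝ × (Fin d → ℝ) → ℝ}

theorem rho_pos (αe : ℝ) (x : Fin d → ℝ) : 0 < rho αe x := by
  unfold rho
  positivity

theorem contDiff_rho (αe : ℝ) : ContDiff ℝ (⊤ : ℕ∞) (rho (d := d) αe) :=
  ContDiff.rpow_const_of_ne (by fun_prop) fun x => by positivity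

/-- The squared weight `ρ²`, viewed as a function of `(t, x)`. -/
def rhoSq (αe : ℝ) (q : ℝ × (Fin d → ℝ)) : ℝ := rho αe q.2 ^ 2

theorem contDiff_rhoSq (αe : ℝ) : ContDiff ℝ (⊤ : ℕ∞) (rhoSq (d := d) αe) :=
  ((contDiff_rho αe).comp contDiff_snd).pow 2

theorem continuous_rho_snd (αe : ℝ) : Continuous fun q : ℝ × (Fin d → ℝ) => rho αe q.2 :=
  (contDiff_rho αe).continuous.comp continuous_snd

theorem dxi_rhoSq (αe : ℝ) (q : ℝ × (Fin d → ℝ)) (i : Fin d) :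
    dxi (rhoSq αe) q i = fderiv ℝ (fun y => rho αe y ^ 2) q.2 (Pi.single i 1) := by
  have hd : DifferentiableAt ℝ (fun y : Fin d → ℝ => rho αe y ^ 2) q.2 :=
    ((contDiff_rho αe).pow 2).differentiable (by simp) q.2
  rw [dxi, show rhoSq αe = (fun y : Fin d → ℝ => rho αe y ^ 2) ∘ Prod.snd from rfl,
    fderiv_comp q hd differentiableAt_snd, fderiv_snd]
  rfl

/-- The field `(ρ φ, ρ⁻¹ ∇(ρ² φ))`, whose `L²` norm is equivalent to the norm of
`L²(0,T;H¹_ρ)`. The gradient is taken of `ρ² φ` because that is the derivative against which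
`pairing` tests `f̄`, so that `pairing` becomes an `L²` inner product. -/
def weightedJet (αe : ℝ) (φ : ℝ × (Fin d → ℝ) → ℝ) (q : ℝ × (Fin d → ℝ)) :
    EuclideanSpace ℝ (Option (Fin d)) :=
  WithLp.toLp 2 fun o => o.elim (rho αe q.2 * φ q) fun i => dxi (rhoSq αe * φ) q i / rho αe q.2

theorem weightedJet_none (q : ℝ × (Fin d → ℝ)) :
    weightedJet αe φ q none = rho αe q.2 * φ q := rfl

theorem weightedJet_some (q : ℝ × (Fin d → ℝ)) (i : Fin d) :
    weightedJet αe φ q (some i) = dxi (rhoSq αe * φ) q i / rho αe q.2 := rfl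

theorem weightedJet_add (hφ : IsTestQT T φ) (hψ : IsTestQT T ψ) :
    weightedJet αe (φ + ψ) = weightedJet αe φ + weightedJet αe ψ := by
  ext q (_ | i)
  · simp only [weightedJet_none, Pi.add_apply, PiLp.add_apply]
    ring
  · simp only [weightedJet_some, Pi.add_apply, PiLp.add_apply, mul_add,
      dxi_add (hφ.mul_left (contDiff_rhoSq αe)).differentiable
        (hψ.mul_left (contDiff_rhoSq αe)).differentiable, add_div]

theorem weightedJet_const_smul (c : ℝ) (φ : ℝ × (Fin d → ℝ) → ℝ) :
    weightedJet αe (c • φ) = c • weightedJet αe φ := by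
  ext q (_ | i)
  · simp only [weightedJet_none, Pi.smul_apply, PiLp.smul_apply, smul_eq_mul]
    ring
  · simp only [weightedJet_some, Pi.smul_apply, PiLp.smul_apply, smul_eq_mul, mul_smul_comm,
      dxi_const_smul, mul_div_assoc]

theorem continuous_weightedJet (αe : ℝ) (hφ : IsTestQT T φ) : Continuous (weightedJet αe φ) := by
  refine (PiLp.continuous_toLp 2 _).comp (continuous_pi ?_)
  rintro (_ | i)
  · exact (continuous_rho_snd αe).mul hφ.continuous
  · exact (continuous_dxi ((contDiff_rhoSq αe).mul hφ.1) i).div (continuous_rho_snd αe)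
      fun q => (rho_pos αe q.2).ne'

theorem hasCompactSupport_weightedJet (αe : ℝ) (hφ : IsTestQT T φ) :
    HasCompactSupport (weightedJet αe φ) := by
  refine HasCompactSupport.intro hφ.2.1 fun q hq => ?_
  ext (_ | i)
  · simp [weightedJet_none, image_eq_zero_of_notMem_tsupport hq]
  · have hq' : q ∉ tsupport (rhoSq αe * φ) := fun h => hq (tsupport_mul_subset_right h)
    simp [weightedJet_some, dxi_eq_zero_of_notMem_tsupport hq']

theorem norm_weightedJet_sq (q : ℝ × (Fin d → ℝ)) :
    ‖weightedJet αe φ q‖ ^ 2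
      = weightedJet αe φ q none ^ 2 + ∑ i, weightedJet αe φ q (some i) ^ 2 := by
  rw [EuclideanSpace.real_norm_sq_eq, Fintype.sum_option]

/-- Lebesgue measure on `Q_T = [0,T] × ℝ^d`. -/
abbrev volumeQT (d : ℕ) (T : ℝ) : Measure (ℝ × (Fin d → ℝ)) :=
  volume.restrict (Icc 0 T ×ˢ univ)

theorem memLp_weightedJet (αe : ℝ) (hφ : IsTestQT T φ) :
    MemLp (weightedJet αe φ) 2 (volumeQT d T) :=
  ((continuous_weightedJet αe hφ).memLp_of_hasCompactSupport
    (hasCompactSupport_weightedJet αe hφ)).restrict _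

/-- A norm on test functions equivalent to the norm of `L²(0,T;H¹_ρ)`, see `weightedJet`. -/
def h1rhoNorm (T αe : ℝ) (φ : ℝ × (Fin d → ℝ) → ℝ) : ℝ≥0∞ :=
  eLpNorm (weightedJet αe φ) 2 (volumeQT d T)

theorem h1rhoNorm_ne_top (αe : ℝ) (hφ : IsTestQT T φ) : h1rhoNorm T αe φ ≠ ⊤ :=
  (memLp_weightedJet αe hφ).eLpNorm_ne_top

theorem dirichletEnergy_eq_lintegral_volumeQT (hφ : IsTestQT T φ) :
    dirichletEnergy φ = ∫⁻ q, ENNReal.ofReal (∑ i, dxi φ q i ^ 2) ∂volumeQT d T := by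
  refine (setLIntegral_eq_of_support_subset (Function.support_subset_iff'.2 fun q hq => ?_)).symm
  have hq' : q ∉ tsupport φ := fun h => hq (prod_mono_left Ioo_subset_Icc_self (hφ.2.2 h))
  simp [dxi_eq_zero_of_notMem_tsupport hq']

theorem sum_add_mul_sq_le {ι : Type*} [Fintype ι] (a y : ℝ) (x b : ι → ℝ) :
    ∑ i, (a * x i + b i * y) ^ 2 ≤ 2 * (a ^ 2 + ∑ i, b i ^ 2) * (y ^ 2 + ∑ i, x i ^ 2) := by
  calc ∑ i, (a * x i + b i * y) ^ 2 ≤ ∑ i, (2 * (a ^ 2 * x i ^ 2) + 2 * y ^ 2 * b i ^ 2) :=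
        Finset.sum_le_sum fun i _ => by linarith [add_sq_le (a := a * x i) (b := b i * y)]
    _ = 2 * (a ^ 2 * ∑ i, x i ^ 2) + 2 * y ^ 2 * ∑ i, b i ^ 2 := by
        simp only [Finset.sum_add_distrib, Finset.mul_sum]
    _ ≤ 2 * (a ^ 2 + ∑ i, b i ^ 2) * (y ^ 2 + ∑ i, x i ^ 2) := by
        have hb : 0 ≤ ∑ i, b i ^ 2 := Finset.sum_nonneg fun _ _ => sq_nonneg _
        have hx : 0 ≤ ∑ i, x i ^ 2 := Finset.sum_nonneg fun _ _ => sq_nonneg _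
        nlinarith [mul_nonneg hb hx, mul_nonneg (sq_nonneg a) (sq_nonneg y)]

theorem exists_sum_dxi_mul_rhoSq_mul_sq_le (αe : ℝ) {η : ℝ × (Fin d → ℝ) → ℝ}
    (hη : IsTestQT T η) : ∃ M : ℝ, 0 ≤ M ∧ ∀ φ, IsTestQT T φ → ∀ q,
      ∑ i, dxi (η * (rhoSq αe * φ)) q i ^ 2 ≤ M ^ 2 * ‖weightedJet αe φ q‖ ^ 2 := by
  let m : ℝ × (Fin d → ℝ) → ℝ := fun q =>
    (η q * rho αe q.2) ^ 2 + ∑ i, (rho αe q.2 * dxi η q i) ^ 2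
  obtain ⟨M, hM⟩ : ∃ M, ∀ q, ‖m q‖ ≤ M := by
    refine Continuous.bounded_above_of_compact_support ?_ (HasCompactSupport.intro hη.2.1 ?_)
    · exact ((hη.continuous.mul (continuous_rho_snd αe)).pow 2).add (continuous_finsetSum _
        fun i _ => ((continuous_rho_snd αe).mul (continuous_dxi hη.1 i)).pow 2)
    · intro q hq
      simp [m, image_eq_zero_of_notMem_tsupport hq, dxi_eq_zero_of_notMem_tsupport hq]
  have M_nonneg : 0 ≤ M := (norm_nonneg _).trans (hM 0)
  refine ⟨√(2 * M), Real.sqrt_nonneg _, fun φ hφ q => ?_⟩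
  have product_rule (i : Fin d) : dxi (η * (rhoSq αe * φ)) q i
      = (η q * rho αe q.2) * weightedJet αe φ q (some i)
        + (rho αe q.2 * dxi η q i) * weightedJet αe φ q none := by
    rw [dxi_mul hη.differentiable (hφ.mul_left (contDiff_rhoSq αe)).differentiable,
      weightedJet_some, weightedJet_none]
    have := (rho_pos αe q.2).ne'
    simp only [Pi.mul_apply, rhoSq]
    field_simp
  simp only [product_rule]
  refine (sum_add_mul_sq_le _ _ _ _).trans ?_
  rw [norm_weightedJet_sq, Real.sq_sqrt (by positivity)]
  gcongr
  exact (le_abs_self _).trans (hM q)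

theorem exists_eqOn_dirichletEnergy_le_h1rhoNorm_sq (αe : ℝ) {C : Set (ℝ × (Fin d → ℝ))}
    (hC : IsCompact C) (hCT : C ⊆ Ioo 0 T ×ˢ univ) :
    ∃ M : ℝ, ∀ φ, IsTestQT T φ → ∃ ψ, IsTestQT T ψ ∧ EqOn ψ φ C ∧
      dirichletEnergy ψ ≤ (ENNReal.ofReal M * h1rhoNorm T αe φ) ^ 2 := by
  obtain ⟨χ, hχ, hχ1⟩ := exists_isTestQT_eqOn_one hC hCT
  have rhoSq_ne_zero (q : ℝ × (Fin d → ℝ)) : rhoSq αe q ≠ 0 := pow_ne_zero 2 (rho_pos αe q.2).ne'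
  have hη : IsTestQT T ((rhoSq αe)⁻¹ * χ) :=
    hχ.mul_left ((contDiff_rhoSq αe).inv rhoSq_ne_zero)
  obtain ⟨M, hM0, hM⟩ := exists_sum_dxi_mul_rhoSq_mul_sq_le αe hη
  refine ⟨M, fun φ hφ => ⟨(rhoSq αe)⁻¹ * χ * (rhoSq αe * φ),
    (hφ.mul_left (contDiff_rhoSq αe)).mul_left hη.1, fun q hq => ?_, ?_⟩⟩
  · have := rhoSq_ne_zero q
    simp only [Pi.mul_apply, Pi.inv_apply, hχ1 hq, Pi.one_apply]
    field_simp
  · rw [dirichletEnergy_eq_lintegral_volumeQT ((hφ.mul_left (contDiff_rhoSq αe)).mul_left hη.1)]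
    calc ∫⁻ q, ENNReal.ofReal (∑ i, dxi ((rhoSq αe)⁻¹ * χ * (rhoSq αe * φ)) q i ^ 2) ∂volumeQT d T
        ≤ ∫⁻ q, ENNReal.ofReal M ^ 2 * ENNReal.ofReal (‖weightedJet αe φ q‖ ^ 2)
            ∂volumeQT d T := by
          refine lintegral_mono fun q => ?_
          rw [← ENNReal.ofReal_pow hM0, ← ENNReal.ofReal_mul (sq_nonneg M)]
          exact ENNReal.ofReal_le_ofReal (hM φ hφ q)
      _ = (ENNReal.ofReal M * h1rhoNorm T αe φ) ^ 2 := by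
          rw [lintegral_const_mul' _ _ (by finiteness), lintegral_ofReal_norm_sq, mul_pow,
            h1rhoNorm]

end WeightedNorm

section DualBounds

variable {d : ℕ} {T αe : ℝ} {μ ν : Measure (ℝ × (Fin d → ℝ))}

/-- `μ` charges the superlevel set `{ψ ≥ 1}` of a test function by at most `c` times the energy
of `ψ`; for finite `c` this is a quantitative form of absolute continuity with respect to
`capBar`. -/
def IsCapacityDominated (T : ℝ) (c : ℝ≥0∞) (μ : Measure (ℝ × (Fin d → ℝ))) : Prop :=
  ∀ ψ, IsTestQT T ψ → μ {q | 1 ≤ ψ q} ≤ c * dirichletEnergy ψ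

/-- Integration against `μ` is a bounded functional on test functions for the norm `h1rhoNorm`.
Since `φ` may be replaced by `-φ`, bounding the positive part of `φ` is enough. -/
def IsDualBounded (T αe : ℝ) (μ : Measure (ℝ × (Fin d → ℝ))) : Prop :=
  ∃ D : ℝ≥0∞, D ≠ ⊤ ∧
    ∀ φ, IsTestQT T φ → ∫⁻ q, ENNReal.ofReal (φ q) ∂μ ≤ D * h1rhoNorm T αe φ

/-- `μ` does not charge the Borel subsets of `(0,T) × ℝ^d` of capacity zero. -/
def IsCapBarAbsolutelyContinuous (T : ℝ) (μ : Measure (ℝ × (Fin d → ℝ))) : Prop :=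
  ∀ B, MeasurableSet B → B ⊆ Ioo 0 T ×ˢ univ → capBar T B = 0 → μ B = 0

theorem IsCapBarAbsolutelyContinuous.mono (hμ : IsCapBarAbsolutelyContinuous T μ) (h : ν ≤ μ) :
    IsCapBarAbsolutelyContinuous T ν :=
  fun B hB hBT hB0 => le_zero_iff.1 ((h B).trans_eq (hμ B hB hBT hB0))

theorem IsCapacityDominated.lintegral_ofReal_le {c N : ℝ≥0∞} (hμ : IsCapacityDominated T c μ)
    {ψ : ℝ × (Fin d → ℝ) → ℝ} (hψ : IsTestQT T ψ) (hN : N ≠ ⊤) (hψN : dirichletEnergy ψ ≤ N ^ 2) :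
    ∫⁻ q, ENNReal.ofReal (ψ q) ∂μ ≤ (μ univ + c) * N := by
  rw [← ENNReal.ofReal_toReal hN]
  refine lintegral_ofReal_le_of_measure_le_div_sq hψ.continuous.measurable
    ENNReal.toReal_nonneg fun t ht => ?_
  calc μ {q | t ≤ ψ q} = μ {q | 1 ≤ (t⁻¹ • ψ) q} := by
        simp only [Pi.smul_apply, smul_eq_mul, inv_mul_eq_div, one_le_div ht]
    _ ≤ c * (ENNReal.ofReal (t⁻¹ ^ 2) * dirichletEnergy ψ) :=
        (hμ _ (hψ.const_smul _)).trans_eq (by rw [dirichletEnergy_const_smul])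
    _ ≤ c * (ENNReal.ofReal (t⁻¹ ^ 2) * N ^ 2) := by gcongr
    _ = c * ENNReal.ofReal ((N.toReal / t) ^ 2) := by
        rw [div_eq_inv_mul, mul_pow, ENNReal.ofReal_mul (by positivity),
          ENNReal.ofReal_pow ENNReal.toReal_nonneg, ENNReal.ofReal_toReal hN]

theorem IsCapacityDominated.isDualBounded [IsFiniteMeasure μ] {c : ℝ≥0∞} (hc : c ≠ ⊤)
    (hμ : IsCapacityDominated T c μ) (αe : ℝ) {C : Set (ℝ × (Fin d → ℝ))} (hC : IsCompact C)
    (hCT : C ⊆ Ioo 0 T ×ˢ univ) (hμC : μ Cᶜ = 0) : IsDualBounded T αe μ := by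
  obtain ⟨M, hM⟩ := exists_eqOn_dirichletEnergy_le_h1rhoNorm_sq αe hC hCT
  refine ⟨(μ univ + c) * ENNReal.ofReal M, by finiteness, fun φ hφ => ?_⟩
  obtain ⟨ψ, hψ, hψφ, henergy⟩ := hM φ hφ
  calc ∫⁻ q, ENNReal.ofReal (φ q) ∂μ = ∫⁻ q, ENNReal.ofReal (ψ q) ∂μ := by
        refine lintegral_congr_ae ?_
        filter_upwards [mem_ae_iff.2 hμC] with q hq
        rw [hψφ hq]
    _ ≤ (μ univ + c) * (ENNReal.ofReal M * h1rhoNorm T αe φ) :=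
        hμ.lintegral_ofReal_le hψ
          (ENNReal.mul_ne_top ENNReal.ofReal_ne_top (h1rhoNorm_ne_top αe hφ)) henergy
    _ = (μ univ + c) * ENNReal.ofReal M * h1rhoNorm T αe φ := (mul_assoc _ _ _).symm

theorem exists_isCapacityDominated_restrict_compl (T : ℝ) (ν : Measure (ℝ × (Fin d → ℝ)))
    [IsFiniteMeasure ν] {c : ℝ≥0∞} :
    ∃ Z, MeasurableSet Z ∧ Z ⊆ Ioo 0 T ×ˢ univ ∧ c * capBar T Z ≤ ν univ ∧
      IsCapacityDominated T c (ν.restrict Zᶜ) := by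
  have measurableSet_superlevel (φ : testSubmodule d T) :
      MeasurableSet {q | 1 ≤ (φ : ℝ × (Fin d → ℝ) → ℝ) q} :=
    measurableSet_le measurable_const φ.2.continuous.measurable
  obtain ⟨s, hsum, hle⟩ := exists_seq_tsum_le_measure_sdiff_le ν measurableSet_superlevel
    (e := fun φ => c * dirichletEnergy (φ : ℝ × (Fin d → ℝ) → ℝ))
    ⟨0, by rw [Submodule.coe_zero, dirichletEnergy_zero, mul_zero]⟩
  refine ⟨⋃ k, {q | 1 ≤ (s k : ℝ × (Fin d → ℝ) → ℝ) q},
    .iUnion fun k => measurableSet_superlevel (s k), iUnion_subset fun k q hq => ?_, ?_,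
    fun ψ hψ => ?_⟩
  · by_contra hqT
    exact zero_lt_one.not_ge (hq.trans_eq ((s k).2.eq_zero_of_notMem hqT))
  · calc c * capBar T (⋃ k, {q | 1 ≤ (s k : ℝ × (Fin d → ℝ) → ℝ) q})
        ≤ c * ∑' k, dirichletEnergy (s k : ℝ × (Fin d → ℝ) → ℝ) :=
          mul_le_mul_right (capBar_le_tsum_dirichletEnergy (fun k => (s k).2) Subset.rfl) c
      _ ≤ ν univ := ENNReal.tsum_mul_left.symm.trans_le hsum
  · rw [Measure.restrict_apply (measurableSet_superlevel ⟨ψ, hψ⟩)]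
    exact hle ⟨ψ, hψ⟩

theorem IsCapBarAbsolutelyContinuous.exists_isCapacityDominated_restrict [IsFiniteMeasure ν]
    (hν : IsCapBarAbsolutelyContinuous T ν) :
    ∃ F : ℕ → Set (ℝ × (Fin d → ℝ)), (∀ n, MeasurableSet (F n)) ∧ ν (⋃ n, F n)ᶜ = 0 ∧
      ∀ n : ℕ, IsCapacityDominated T (n + 1) (ν.restrict (F n)) := by
  choose Z Z_meas hZT hZcap hZdom using fun n : ℕ =>
    exists_isCapacityDominated_restrict_compl T ν (c := n + 1)
  refine ⟨fun n => (Z n)ᶜ, fun n => (Z_meas n).compl, ?_, hZdom⟩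
  rw [← compl_iInter, compl_compl]
  refine hν _ (.iInter Z_meas) (iInter_subset_of_subset 0 (hZT 0)) ?_
  by_contra hcap
  obtain ⟨n, hn⟩ := ENNReal.exists_nat_mul_gt hcap (measure_ne_top ν univ)
  refine hn.not_ge ?_
  calc n * capBar T (⋂ n, Z n) ≤ (n + 1) * capBar T (Z n) := by
        gcongr
        · exact le_self_add
        · exact capBar_mono (iInter_subset Z n)
    _ ≤ ν univ := hZcap n

theorem isDualBounded_restrict_compl_strip (T αe : ℝ) (ν : Measure (ℝ × (Fin d → ℝ))) :
    IsDualBounded T αe (ν.restrict (Ioo 0 T ×ˢ univ)ᶜ) := by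
  refine ⟨0, ENNReal.zero_ne_top, fun φ hφ => ?_⟩
  rw [setLIntegral_eq_zero (measurableSet_Ioo.prod .univ).compl fun q hq => by
    simp [hφ.eq_zero_of_notMem hq]]
  exact zero_le

theorem isSigmaCompact_strip (d : ℕ) (T : ℝ) :
    IsSigmaCompact (Ioo 0 T ×ˢ univ : Set (ℝ × (Fin d → ℝ))) := by
  have := (isOpen_Ioo.prod isOpen_univ : IsOpen (Ioo 0 T ×ˢ univ : Set (ℝ × (Fin d → ℝ))))
    |>.locallyCompactSpace
  exact isSigmaCompact_iff_sigmaCompactSpace.2 inferInstance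

theorem IsCapBarAbsolutelyContinuous.exists_isDualBounded_restrict [IsFiniteMeasureOnCompacts ν]
    (hν : IsCapBarAbsolutelyContinuous T ν) (αe : ℝ) :
    ∃ G : Option (ℕ × ℕ) → Set (ℝ × (Fin d → ℝ)), (∀ p, MeasurableSet (G p)) ∧
      ν (⋃ p, G p)ᶜ = 0 ∧ ∀ p, IsDualBounded T αe (ν.restrict (G p)) := by
  obtain ⟨C, hC, hCT⟩ := isSigmaCompact_strip d T
  have (m : ℕ) : Fact (ν (C m) < ⊤) := ⟨(hC m).measure_lt_top⟩
  choose F F_meas hF_null hF_dom using fun m =>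
    (hν.mono (Measure.restrict_le_self (s := C m))).exists_isCapacityDominated_restrict
  refine ⟨fun p => p.elim (Ioo 0 T ×ˢ univ)ᶜ fun p => F p.1 p.2 ∩ C p.1, ?_, ?_, ?_⟩
  · rintro (_ | ⟨m, n⟩)
    · exact (measurableSet_Ioo.prod .univ).compl
    · exact (F_meas m n).inter (hC m).measurableSet
  · refine measure_mono_null (fun q hq => ?_) (measure_iUnion_null fun m =>
      (Measure.restrict_apply (.compl (.iUnion (F_meas m)))).symm.trans (hF_null m))
    simp only [mem_compl_iff, mem_iUnion, not_exists] at hq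
    obtain ⟨m, hm⟩ := mem_iUnion.1 (hCT.symm ▸ not_not.1 (hq none) : q ∈ ⋃ m, C m)
    exact mem_iUnion.2 ⟨m, fun hqF => (mem_iUnion.1 hqF).elim fun n hn => hq (some (m, n)) ⟨hn, hm⟩,
      hm⟩
  · rintro (_ | ⟨m, n⟩)
    · exact isDualBounded_restrict_compl_strip T αe ν
    · have hdom := hF_dom m n
      rw [Measure.restrict_restrict (F_meas m n)] at hdom
      have : Fact (ν (F m n ∩ C m) < ⊤) :=
        ⟨(measure_mono inter_subset_right).trans_lt (hC m).measure_lt_top⟩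
      refine hdom.isDualBounded (by finiteness) αe (hC m) (hCT ▸ subset_iUnion C m) ?_
      rw [Measure.restrict_apply (hC m).measurableSet.compl]
      exact measure_mono_null (fun q hq => (hq.1 hq.2.2).elim) measure_empty

theorem IsCapBarAbsolutelyContinuous.exists_isDualBounded_withDensity
    [IsFiniteMeasureOnCompacts ν] (hν : IsCapBarAbsolutelyContinuous T ν) (αe : ℝ) :
    ∃ θ : ℝ × (Fin d → ℝ) → ℝ≥0∞, Measurable θ ∧ (∀ q, θ q ≤ 1) ∧ (∀ᵐ q ∂ν, θ q ≠ 0) ∧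
      IsDualBounded T αe (ν.withDensity θ) := by
  obtain ⟨G, G_meas, hG_null, hG⟩ := hν.exists_isDualBounded_restrict αe
  choose D D_ne_top hD using hG
  obtain ⟨θ, θ_meas, θ_le, θ_ne_zero, hθ⟩ := exists_density_lintegral_mul_le G_meas D_ne_top
  refine ⟨θ, θ_meas, θ_le, ?_, 1, ENNReal.one_ne_top, fun φ hφ => ?_⟩
  · filter_upwards [mem_ae_iff.2 hG_null] with q hq using θ_ne_zero q hq
  · have φ_meas : Measurable fun q => ENNReal.ofReal (φ q) :=
      hφ.continuous.measurable.ennreal_ofReal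
    rw [lintegral_withDensity_eq_lintegral_mul _ θ_meas φ_meas, one_mul]
    exact hθ ν _ _ φ_meas fun p => hD p φ hφ

end DualBounds

section RieszRepresentation

variable {d : ℕ} {T αe : ℝ} {φ : ℝ × (Fin d → ℝ) → ℝ} {γ : Measure (ℝ × (Fin d → ℝ))}

/-- `weightedJet` as a linear map from the test functions to `L²(Q_T; ℝ^(1+d))`. -/
def weightedJetLp (d : ℕ) (T αe : ℝ) :
    testSubmodule d T →ₗ[ℝ] Lp (EuclideanSpace ℝ (Option (Fin d))) 2 (volumeQT d T) where
  toFun φ := (memLp_weightedJet αe φ.2).toLp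
  map_add' φ ψ := by
    rw [← MemLp.toLp_add]
    exact MemLp.toLp_congr _ _ (.of_eq (weightedJet_add φ.2 ψ.2))
  map_smul' c φ := by
    rw [RingHom.id_apply, ← MemLp.toLp_const_smul]
    exact MemLp.toLp_congr _ _ (.of_eq (weightedJet_const_smul c _))

/-- Integration against `γ` as a linear functional on the test functions. -/
def integralTest (T : ℝ) (γ : Measure (ℝ × (Fin d → ℝ))) [IsFiniteMeasureOnCompacts γ] :
    testSubmodule d T →ₗ[ℝ] ℝ where
  toFun φ := ∫ q, (φ : ℝ × (Fin d → ℝ) → ℝ) q ∂γ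
  map_add' φ ψ := integral_add (φ.2.integrable γ) (ψ.2.integrable γ)
  map_smul' c φ := integral_const_mul c (φ : ℝ × (Fin d → ℝ) → ℝ)

theorem IsDualBounded.exists_integralTest_le [IsFiniteMeasureOnCompacts γ]
    (hγ : IsDualBounded T αe γ) :
    ∃ M, ∀ φ, integralTest T γ φ ≤ M * ‖weightedJetLp d T αe φ‖ := by
  obtain ⟨D, hD, hγD⟩ := hγ
  refine ⟨D.toReal, fun φ => ?_⟩
  calc integralTest T γ φ
      ≤ (∫⁻ q, ENNReal.ofReal ((φ : ℝ × (Fin d → ℝ) → ℝ) q) ∂γ).toReal :=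
        (integral_eq_lintegral_pos_part_sub_lintegral_neg_part (φ.2.integrable γ)).trans_le
          (sub_le_self _ ENNReal.toReal_nonneg)
    _ ≤ (D * h1rhoNorm T αe (φ : ℝ × (Fin d → ℝ) → ℝ)).toReal :=
        ENNReal.toReal_mono (ENNReal.mul_ne_top hD (h1rhoNorm_ne_top αe φ.2)) (hγD φ φ.2)
    _ = D.toReal * ‖weightedJetLp d T αe φ‖ := by
        rw [ENNReal.toReal_mul, weightedJetLp, LinearMap.coe_mk, AddHom.coe_mk, Lp.norm_toLp,
          h1rhoNorm]

theorem memL2rho_div_rho {f : ℝ × (Fin d → ℝ) → ℝ} (hf : Measurable f)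
    (hf2 : MemLp f 2 (volumeQT d T)) : MemL2rho T αe fun t x => f (t, x) / rho αe x := by
  refine ⟨hf.div (continuous_rho_snd αe).measurable, ?_⟩
  refine (lintegral_congr fun q => ?_).trans_lt hf2.integrable_sq.lintegral_lt_top
  rw [div_mul_cancel₀ _ (rho_pos αe q.2).ne', Real.rpow_two, sq_abs]

theorem memLp_euclideanSpace_apply {X ι : Type*} [MeasurableSpace X] [Fintype ι] {m : Measure X}
    {p : ℝ≥0∞} {f : X → EuclideanSpace ℝ ι} (hf : MemLp f p m) (i : ι) :
    MemLp (fun x => f x i) p m :=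
  hf.mono ((PiLp.continuous_apply 2 _ i).comp_aestronglyMeasurable hf.1)
    (.of_forall fun x => PiLp.norm_apply_le (f x) i)

theorem weightedJet_some_eq (hφ : IsTestQT T φ) (q : ℝ × (Fin d → ℝ)) (i : Fin d) :
    weightedJet αe φ q (some i) = (rho αe q.2 ^ 2 * dxi φ q i
      + φ q * fderiv ℝ (fun y => rho αe y ^ 2) q.2 (Pi.single i 1)) / rho αe q.2 := by
  rw [weightedJet_some, dxi_mul ((contDiff_rhoSq αe).differentiable (by simp)) hφ.differentiable,
    dxi_rhoSq, rhoSq]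

theorem pairingTest_eq_integral_inner_weightedJet {h : ℝ × (Fin d → ℝ) →
    EuclideanSpace ℝ (Option (Fin d))} (hh : MemLp h 2 (volumeQT d T)) (hφ : IsTestQT T φ) :
    pairingTest T αe (fun t x => h (t, x) none / rho αe x)
        (fun t x i => -(h (t, x) (some i)) / rho αe x) φ
      = ∫ q, inner ℝ (h q) (weightedJet αe φ q) ∂volumeQT d T := by
  have integrable_mul o : Integrable (fun q => h q o * weightedJet αe φ q o) (volumeQT d T) :=
    (memLp_euclideanSpace_apply hh o).integrable_mul
      (memLp_euclideanSpace_apply (memLp_weightedJet αe hφ) o)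
  calc pairingTest T αe _ _ φ
      = (∫ q, h q none * weightedJet αe φ q none ∂volumeQT d T)
        - ∫ q, -∑ i, h q (some i) * weightedJet αe φ q (some i) ∂volumeQT d T := by
        rw [pairingTest, pairing]
        congr 1 <;> refine integral_congr_ae (.of_forall fun q => ?_) <;>
          have hρ := (rho_pos αe q.2).ne'
        · simp only [weightedJet_none]
          field_simp
        · simp only [weightedJet_some_eq hφ, ← Finset.sum_neg_distrib]
          refine Finset.sum_congr rfl fun i _ => ?_
          field_simp
    _ = ∫ q, inner ℝ (h q) (weightedJet αe φ q) ∂volumeQT d T := by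
        rw [integral_neg, sub_neg_eq_add,
          ← integral_add (integrable_mul none) (integrable_finsetSum _ fun i _ => integrable_mul _)]
        simp only [PiLp.inner_apply, Fintype.sum_option, Real.inner_apply]

theorem IsDualBounded.measureRepHminus [IsFiniteMeasureOnCompacts γ]
    (hγ : IsDualBounded T αe γ) : MeasureRepHminus T αe γ := by
  obtain ⟨M, hM⟩ := hγ.exists_integralTest_le
  obtain ⟨h, hh⟩ := exists_inner_eq_of_le_mul_norm _ _ hM
  have h_meas (o : Option (Fin d)) : Measurable fun q => h q o :=
    (PiLp.continuous_apply 2 _ o).measurable.comp (Lp.stronglyMeasurable h).measurable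
  have h_memLp (o : Option (Fin d)) : MemLp (fun q => h q o) 2 (volumeQT d T) :=
    memLp_euclideanSpace_apply (Lp.memLp h) o
  refine ⟨_, _, memL2rho_div_rho (h_meas none) (h_memLp none),
    fun i => memL2rho_div_rho (h_meas (some i)).neg (h_memLp (some i)).neg, fun φ hφ => ?_⟩
  calc pairingTest T αe _ _ φ = ∫ q, inner ℝ (h q) (weightedJet αe φ q) ∂volumeQT d T :=
        pairingTest_eq_integral_inner_weightedJet (Lp.memLp h) hφ
    _ = inner ℝ h (weightedJetLp d T αe ⟨φ, hφ⟩) := by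
        rw [L2.inner_def]
        refine integral_congr_ae ?_
        filter_upwards [(memLp_weightedJet (T := T) αe hφ).coeFn_toLp] with q hq
        rw [← hq]
        rfl
    _ = ∫ q, φ q ∂γ := (hh ⟨φ, hφ⟩).symm

end RieszRepresentation

section Decomposition

variable {d : ℕ} {T : ℝ} {ν : Measure (ℝ × (Fin d → ℝ))}

theorem IsCapBarAbsolutelyContinuous.exists_measureRepHminus_setLIntegral_eq
    [IsFiniteMeasureOnCompacts ν] (hν : IsCapBarAbsolutelyContinuous T ν) (αe : ℝ) :
    ∃ (γ : Measure (ℝ × (Fin d → ℝ))) (α : ℝ × (Fin d → ℝ) → ℝ),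
      IsFiniteMeasureOnCompacts γ ∧ MeasureRepHminus T αe γ ∧ Measurable α ∧ (∀ q, 0 ≤ α q) ∧
      ∀ B, MeasurableSet B → ∫⁻ q in B, ENNReal.ofReal (α q) ∂γ = ν B := by
  obtain ⟨θ, θ_meas, θ_le, θ_ne_zero, hθ⟩ := hν.exists_isDualBounded_withDensity αe
  have θ_ne_top q : θ q ≠ ⊤ := ne_top_of_le_ne_top ENNReal.one_ne_top (θ_le q)
  have hle : ν.withDensity θ ≤ ν :=
    (withDensity_mono (.of_forall θ_le)).trans_eq withDensity_one
  have : IsFiniteMeasureOnCompacts (ν.withDensity θ) :=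
    ⟨fun K hK => (hle K).trans_lt hK.measure_lt_top⟩
  refine ⟨ν.withDensity θ, fun q => (θ q)⁻¹.toReal, this, hθ.measureRepHminus,
    θ_meas.inv.ennreal_toReal, fun q => ENNReal.toReal_nonneg, fun B hB => ?_⟩
  calc ∫⁻ q in B, ENNReal.ofReal (θ q)⁻¹.toReal ∂ν.withDensity θ
      = ∫⁻ q in B, (θ q)⁻¹ ∂ν.withDensity θ := by
        refine lintegral_congr_ae (ae_restrict_of_ae ?_)
        filter_upwards [withDensity_absolutelyContinuous ν θ θ_ne_zero] with q hq
        exact ENNReal.ofReal_toReal (ENNReal.inv_ne_top.2 hq)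
    _ = ν B := by
        rw [← withDensity_apply _ hB,
          withDensity_inv_same θ_meas θ_ne_zero (.of_forall θ_ne_top)]

theorem exists_isCapBarAbsolutelyContinuous_add_eq_add {μ ν : Measure (ℝ × (Fin d → ℝ))}
    [SigmaFinite μ] [SigmaFinite ν]
    (h : ∀ B, MeasurableSet B → B ⊆ Ioo 0 T ×ˢ univ → capBar T B = 0 → μ B = ν B) :
    ∃ μ' ν', μ' ≤ μ ∧ ν' ≤ ν ∧ μ + ν' = ν + μ' ∧
      IsCapBarAbsolutelyContinuous T μ' ∧ IsCapBarAbsolutelyContinuous T ν' := by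
  obtain ⟨μ', ν', S, hS, hμ', hν', hadd, hμ'S, hν'S⟩ :=
    exists_jordanDecomposition_of_sigmaFinite μ ν
  have eq_of_subset {A B} (hBT : B ⊆ Ioo 0 T ×ˢ univ) (hB0 : capBar T B = 0) (hAB : A ⊆ B)
      (hA : MeasurableSet A) : μ A = ν A :=
    h A hA (hAB.trans hBT) (le_zero_iff.1 ((capBar_mono hAB).trans_eq hB0))
  refine ⟨μ', ν', hμ', hν', hadd, fun B hB hBT hB0 => ?_, fun B hB hBT hB0 => ?_⟩
  · exact measure_eq_zero_of_jordanDecomposition hS hadd hμ'S hν'S hB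
      fun A hAB hA => eq_of_subset hBT hB0 hAB hA
  · exact measure_eq_zero_of_jordanDecomposition hS.compl hadd.symm
      ((compl_compl S).symm ▸ hν'S) hμ'S hB fun A hAB hA => (eq_of_subset hBT hB0 hAB hA).symm

theorem statement1_general (T αe : ℝ) (μp μn : Measure (ℝ × (Fin d → ℝ)))
    [IsFiniteMeasureOnCompacts μp] [IsFiniteMeasureOnCompacts μn]
    (habs : ∀ B : Set (ℝ × (Fin d → ℝ)), MeasurableSet B →
      B ⊆ Ioo (0:ℝ) T ×ˢ (univ : Set (Fin d → ℝ)) → capBar T B = 0 → μp B = μn B) :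
    ∃ (γ1 γ2 : Measure (ℝ × (Fin d → ℝ))) (α1 α2 : ℝ × (Fin d → ℝ) → ℝ),
      IsFiniteMeasureOnCompacts γ1 ∧ IsFiniteMeasureOnCompacts γ2 ∧
      MeasureRepHminus T αe γ1 ∧ MeasureRepHminus T αe γ2 ∧
      Measurable α1 ∧ Measurable α2 ∧ (∀ q, 0 ≤ α1 q) ∧ (∀ q, 0 ≤ α2 q) ∧
      (∀ K, IsCompact K →
        ∫⁻ q in K, ENNReal.ofReal (α1 q) ∂γ1 < ⊤ ∧ ∫⁻ q in K, ENNReal.ofReal (α2 q) ∂γ2 < ⊤) ∧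
      ∀ B, MeasurableSet B →
        μp B + ∫⁻ q in B, ENNReal.ofReal (α2 q) ∂γ2
          = μn B + ∫⁻ q in B, ENNReal.ofReal (α1 q) ∂γ1 := by
  obtain ⟨μ', ν', hμ', hν', hadd, hμ'_ac, hν'_ac⟩ :=
    exists_isCapBarAbsolutelyContinuous_add_eq_add habs
  have : IsFiniteMeasureOnCompacts μ' := ⟨fun K hK => (hμ' K).trans_lt hK.measure_lt_top⟩
  have : IsFiniteMeasureOnCompacts ν' := ⟨fun K hK => (hν' K).trans_lt hK.measure_lt_top⟩
  obtain ⟨γ1, α1, hγ1, hrep1, hα1, hα1_nonneg, hB1⟩ :=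
    hμ'_ac.exists_measureRepHminus_setLIntegral_eq αe
  obtain ⟨γ2, α2, hγ2, hrep2, hα2, hα2_nonneg, hB2⟩ :=
    hν'_ac.exists_measureRepHminus_setLIntegral_eq αe
  refine ⟨γ1, γ2, α1, α2, hγ1, hγ2, hrep1, hrep2, hα1, hα2, hα1_nonneg, hα2_nonneg,
    fun K hK => ?_, fun B hB => ?_⟩
  · rw [hB1 K hK.measurableSet, hB2 K hK.measurableSet]
    exact ⟨hK.measure_lt_top, hK.measure_lt_top⟩
  · rw [hB1 B hB, hB2 B hB]
    exact DFunLike.congr_fun hadd B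

end Decomposition

/-- Theorem `decom`.
Let `μ = μp − μn` be a (signed) Radon measure on `Q_T` which is absolutely
continuous with respect to the parabolic capacity `cap-bar`.  Then there exist
positive Radon measures `γ₁, γ₂` on `Q_T` belonging (as functionals) to
`𝕃₂(0,T;H⁻¹_ρ)` and nonnegative `α₁ ∈ 𝕃₁_loc(Q_T,γ₁)`, `α₂ ∈ 𝕃₁_loc(Q_T,γ₂)`
such that `dμ = α₁ dγ₁ − α₂ dγ₂`. -/
theorem statement1 {d : ℕ} (T αe : ℝ) (hT : 0 < T)
    (hrho : Integrable fun x : Fin d → ℝ => rho αe x)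
    (μp μn : Measure (ℝ × (Fin d → ℝ)))
    (hμp : IsFiniteMeasureOnCompacts μp) (hμn : IsFiniteMeasureOnCompacts μn)
    (habs : ∀ B : Set (ℝ × (Fin d → ℝ)), MeasurableSet B →
      B ⊆ Ioo (0:ℝ) T ×ˢ (univ : Set (Fin d → ℝ)) → capBar T B = 0 → μp B = μn B) :
    ∃ (γ1 γ2 : Measure (ℝ × (Fin d → ℝ))) (α1 α2 : ℝ × (Fin d → ℝ) → ℝ),
      IsFiniteMeasureOnCompacts γ1 ∧ IsFiniteMeasureOnCompacts γ2 ∧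
      MeasureRepHminus T αe γ1 ∧ MeasureRepHminus T αe γ2 ∧
      Measurable α1 ∧ Measurable α2 ∧ (∀ q, 0 ≤ α1 q) ∧ (∀ q, 0 ≤ α2 q) ∧
      (∀ K : Set (ℝ × (Fin d → ℝ)), IsCompact K →
        K ⊆ Icc (0:ℝ) T ×ˢ (univ : Set (Fin d → ℝ)) →
        (∫⁻ q in K, ENNReal.ofReal (α1 q) ∂γ1) < ⊤ ∧
        (∫⁻ q in K, ENNReal.ofReal (α2 q) ∂γ2) < ⊤) ∧
      ∀ B : Set (ℝ × (Fin d → ℝ)), MeasurableSet B → Bornology.IsBounded B →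
        μp B + (∫⁻ q in B, ENNReal.ofReal (α2 q) ∂γ2)
          = μn B + ∫⁻ q in B, ENNReal.ofReal (α1 q) ∂γ1 := by
  obtain ⟨γ1, γ2, α1, α2, hγ1, hγ2, hrep1, hrep2, hα1, hα2, hα1_nonneg, hα2_nonneg, hloc, hid⟩ :=
    statement1_general T αe μp μn habs
  exact ⟨γ1, γ2, α1, α2, hγ1, hγ2, hrep1, hrep2, hα1, hα2, hα1_nonneg, hα2_nonneg,
    fun K hK _ => hloc K hK, fun B hB _ => hid B hB⟩
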